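/- arXiv:1901.02768 — 8 statements merged into one kernel-verified Lean document; each statement's English description precedes it below -/
import Mathlib

section
/- The Hessian of the logistic loss is Lipschitz continuous with constant γ_x = 12 λ_x max_{1≤i≤n} ‖x_i‖₁: for all z₁, z₂ ∈ ℝ^p, ‖∇²ℓ(z₁) − ∇²ℓ(z₂)‖_F ≤ γ_x ‖z₁ − z₂‖, where ‖·‖_F is the Frobenius norm of a matrix. -/
open scoped RealInnerProductSpace BigOperators
open Matrix

/-- The map `t ↦ eᵗ / (1 + eᵗ)²` is `1`-Lipschitz. -/
lemma abs_logistic_density_sub_le (a b : ℝ) :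
    |Real.exp a / (1 + Real.exp a) ^ 2 - Real.exp b / (1 + Real.exp b) ^ 2| ≤ |a - b| := by
  have hderiv : ∀ t : ℝ, HasDerivAt (fun t : ℝ => Real.exp t / (1 + Real.exp t) ^ 2)
      (Real.exp t * (1 - Real.exp t) / (1 + Real.exp t) ^ 3) t := by
    intro t
    have hpos : 0 < 1 + Real.exp t := by positivity
    have h := (Real.hasDerivAt_exp t).div (((Real.hasDerivAt_exp t).const_add 1).pow 2)
      (pow_ne_zero 2 hpos.ne')
    refine h.congr_deriv ?_
    simp only [Pi.pow_apply]
    field_simp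
    push_cast
    ring
  have hbound : ∀ t : ℝ, ‖Real.exp t * (1 - Real.exp t) / (1 + Real.exp t) ^ 3‖ ≤ 1 := by
    intro t
    have he : 0 < Real.exp t := Real.exp_pos t
    rw [Real.norm_eq_abs, abs_div, abs_of_pos (by positivity : 0 < (1 + Real.exp t) ^ 3),
      div_le_one (by positivity), abs_le]
    constructor <;> nlinarith [pow_pos he 2, pow_pos he 3]
  have h := Convex.norm_image_sub_le_of_norm_hasDerivWithin_le (s := Set.univ)
    (fun t _ => (hderiv t).hasDerivWithinAt) (fun t _ => hbound t) convex_univ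
    (Set.mem_univ b) (Set.mem_univ a)
  simpa using h

open scoped MatrixOrder in
/-- Rayleigh bound: the quadratic form of a real symmetric matrix is at most its largest eigenvalue
times the squared length. -/
lemma Matrix.IsHermitian.dotProduct_mulVec_le_iSup_eigenvalues {ι : Type*} [Fintype ι]
    [DecidableEq ι] {A : Matrix ι ι ℝ} (hA : A.IsHermitian) (v : ι → ℝ) :
    v ⬝ᵥ (A *ᵥ v) ≤ (⨆ i, hA.eigenvalues i) * (v ⬝ᵥ v) := by
  have hle : A ≤ algebraMap ℝ _ (⨆ i, hA.eigenvalues i) := by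
    refine le_algebraMap_of_spectrum_le (fun x hx => ?_) hA.isSelfAdjoint
    rw [hA.spectrum_real_eq_range_eigenvalues] at hx
    obtain ⟨i, rfl⟩ := hx
    exact le_ciSup (Set.finite_range _).bddAbove i
  have h := (Matrix.le_iff.mp hle).dotProduct_mulVec_nonneg v
  simpa [Matrix.sub_mulVec, Algebra.algebraMap_eq_smul_one, Matrix.smul_mulVec] using h

section GramBound

variable {m k l : Type*} [Fintype m] [Fintype k] [Fintype l] {X : Matrix m k ℝ} {L : ℝ}

/-- A bound on `‖X v‖²` for all `v` transfers to the transpose. -/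
lemma Matrix.transpose_mulVec_dotProduct_self_le (hL : 0 ≤ L)
    (hX : ∀ v, (X *ᵥ v) ⬝ᵥ (X *ᵥ v) ≤ L * (v ⬝ᵥ v)) (b : m → ℝ) :
    (Xᵀ *ᵥ b) ⬝ᵥ (Xᵀ *ᵥ b) ≤ L * (b ⬝ᵥ b) := by
  set u := Xᵀ *ᵥ b
  have huu : u ⬝ᵥ u = b ⬝ᵥ (X *ᵥ u) := by
    rw [Matrix.dotProduct_mulVec b, ← Matrix.mulVec_transpose]
  have hcs : (b ⬝ᵥ (X *ᵥ u)) ^ 2 ≤ (b ⬝ᵥ b) * ((X *ᵥ u) ⬝ᵥ (X *ᵥ u)) := by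
    simpa only [dotProduct, sq] using
      Finset.sum_mul_sq_le_sq_mul_sq Finset.univ b (X *ᵥ u)
  have hb : 0 ≤ b ⬝ᵥ b := by simpa using dotProduct_star_self_nonneg b
  have hu0 : 0 ≤ u ⬝ᵥ u := by simpa using dotProduct_star_self_nonneg u
  have hsq : (u ⬝ᵥ u) * (u ⬝ᵥ u) ≤ (L * (b ⬝ᵥ b)) * (u ⬝ᵥ u) := by
    have := mul_le_mul_of_nonneg_left (hX u) hb
    rw [← huu] at hcs
    linarith
  rcases hu0.eq_or_lt with h0 | h0
  · rw [← h0]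
    positivity
  · exact le_of_mul_le_mul_right hsq h0

/-- Left multiplication by `Xᵀ` scales the squared Frobenius norm by at most `L`. -/
lemma Matrix.sum_sq_transpose_mul_le (hL : 0 ≤ L)
    (hX : ∀ v, (X *ᵥ v) ⬝ᵥ (X *ᵥ v) ≤ L * (v ⬝ᵥ v)) (B : Matrix m l ℝ) :
    ∑ a, ∑ b, (Xᵀ * B) a b ^ 2 ≤ L * ∑ i, ∑ b, B i b ^ 2 := by
  rw [Finset.sum_comm, Finset.sum_comm (f := fun i b => B i b ^ 2), Finset.mul_sum]
  refine Finset.sum_le_sum fun b _ => ?_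
  have h := Matrix.transpose_mulVec_dotProduct_self_le hL hX (fun i => B i b)
  simpa only [dotProduct, Matrix.mulVec, Matrix.mul_apply, ← sq] using h

/-- If `|dᵢ| ≤ |⟨xᵢ, w⟩|` and `‖xᵢ‖₂ ≤ c` for all `i`, then `‖Xᵀ diag(d) X‖_F ≤ L c ‖w‖`. -/
lemma Matrix.sum_sq_transpose_mul_diagonal_mul_le [DecidableEq m] (hL : 0 ≤ L)
    (hX : ∀ v, (X *ᵥ v) ⬝ᵥ (X *ᵥ v) ≤ L * (v ⬝ᵥ v)) {c : ℝ}
    (hc : ∀ i, ∑ j, X i j ^ 2 ≤ c ^ 2) {d : m → ℝ} {w : k → ℝ}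
    (hd : ∀ i, |d i| ≤ |(X *ᵥ w) i|) :
    ∑ a, ∑ b, (Xᵀ * diagonal d * X) a b ^ 2 ≤ L ^ 2 * c ^ 2 * (w ⬝ᵥ w) := by
  have hrow : ∑ i, ∑ b, (diagonal d * X) i b ^ 2 ≤ c ^ 2 * ((X *ᵥ w) ⬝ᵥ (X *ᵥ w)) := by
    rw [dotProduct, Finset.mul_sum]
    refine Finset.sum_le_sum fun i _ => ?_
    simp only [diagonal_mul, mul_pow, ← Finset.mul_sum]
    rw [← sq, mul_comm (c ^ 2)]
    exact mul_le_mul (sq_le_sq.mpr (hd i)) (hc i)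
      (Finset.sum_nonneg fun _ _ => sq_nonneg _) (sq_nonneg _)
  calc ∑ a, ∑ b, (Xᵀ * diagonal d * X) a b ^ 2
      ≤ L * ∑ i, ∑ b, (diagonal d * X) i b ^ 2 := by
        rw [Matrix.mul_assoc]
        exact Matrix.sum_sq_transpose_mul_le hL hX _
    _ ≤ L * (c ^ 2 * (L * (w ⬝ᵥ w))) := by
        gcongr
        exact hrow.trans (mul_le_mul_of_nonneg_left (hX w) (sq_nonneg c))
    _ = L ^ 2 * c ^ 2 * (w ⬝ᵥ w) := by ring

end GramBound

/-- The Hessian `∇²ℓ(z) = Xᵀ D(z) X / n` of the logistic loss is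
Lipschitz continuous in the Frobenius norm with constant
`γ_x = 12 λ_x max_{1≤i≤n} ‖xᵢ‖₁`. -/
theorem logistic_loss_hessian_lipschitz (n p : ℕ) (hn : 0 < n) (hp : 0 < p)
    (X : Matrix (Fin n) (Fin p) ℝ) (y : Fin n → ℝ)
    (hy : ∀ i, y i = 0 ∨ y i = 1)
    (D : EuclideanSpace ℝ (Fin p) → Matrix (Fin n) (Fin n) ℝ)
    (hD : ∀ z, D z = Matrix.diagonal (fun i =>
      Real.exp (∑ j, X i j * z j) / (1 + Real.exp (∑ j, X i j * z j)) ^ 2))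
    (H : EuclideanSpace ℝ (Fin p) → Matrix (Fin p) (Fin p) ℝ)
    (hHz : ∀ z, H z = (n : ℝ)⁻¹ • (Xᵀ * D z * X))
    (hH : (Xᵀ * X).IsHermitian)
    (lamx : ℝ) (hlamx : lamx = (⨆ i, hH.eigenvalues i) / (4 * n))
    (gamx : ℝ) (hgamx : gamx = 12 * lamx * ⨆ i : Fin n, ∑ j, |X i j|) :
    ∀ z₁ z₂ : EuclideanSpace ℝ (Fin p),
      Real.sqrt (∑ a, ∑ b, (H z₁ a b - H z₂ a b) ^ 2) ≤ gamx * ‖z₁ - z₂‖ := by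
  intro z₁ z₂
  set L := ⨆ i, hH.eigenvalues i
  set c := ⨆ i : Fin n, ∑ j, |X i j|
  have hL : 0 ≤ L := Real.iSup_nonneg fun i => by
    have hpsd : (Xᵀ * X).PosSemidef := by
      simpa using Matrix.posSemidef_conjTranspose_mul_self X
    exact hpsd.eigenvalues_nonneg i
  have hc0 : 0 ≤ c := Real.iSup_nonneg fun i => Finset.sum_nonneg fun j _ => abs_nonneg _
  have hX : ∀ v, (X *ᵥ v) ⬝ᵥ (X *ᵥ v) ≤ L * (v ⬝ᵥ v) := fun v => by
    have h := hH.dotProduct_mulVec_le_iSup_eigenvalues v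
    rwa [← Matrix.mulVec_mulVec, Matrix.dotProduct_mulVec, Matrix.vecMul_transpose] at h
  have hc : ∀ i, ∑ j, X i j ^ 2 ≤ c ^ 2 := fun i =>
    calc ∑ j, X i j ^ 2 = ∑ j, |X i j| ^ 2 := by simp only [sq_abs]
      _ ≤ (∑ j, |X i j|) ^ 2 := Finset.sum_sq_le_sq_sum_of_nonneg fun j _ => abs_nonneg _
      _ ≤ c ^ 2 := by
        gcongr
        exact le_ciSup (f := fun i => ∑ j, |X i j|) (Set.finite_range _).bddAbove i
  let g : EuclideanSpace ℝ (Fin p) → Fin n → ℝ := fun z i =>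
    Real.exp (∑ j, X i j * z j) / (1 + Real.exp (∑ j, X i j * z j)) ^ 2
  let w : Fin p → ℝ := fun j => z₁ j - z₂ j
  have hd : ∀ i, |(g z₁ - g z₂) i| ≤ |(X *ᵥ w) i| := fun i => by
    have h := abs_logistic_density_sub_le (∑ j, X i j * z₁ j) (∑ j, X i j * z₂ j)
    simpa only [g, w, Pi.sub_apply, Matrix.mulVec, dotProduct, mul_sub,
      Finset.sum_sub_distrib] using h
  have hdiff : ∀ a b, H z₁ a b - H z₂ a b
      = (n : ℝ)⁻¹ * (Xᵀ * diagonal (g z₁ - g z₂) * X) a b := fun a b => by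
    have hsub : diagonal (g z₁ - g z₂) = D z₁ - D z₂ := by
      rw [hD, hD, Matrix.diagonal_sub]
      rfl
    rw [hsub, Matrix.mul_sub, Matrix.sub_mul, hHz, hHz]
    simp only [Matrix.smul_apply, Matrix.sub_apply, smul_eq_mul, mul_sub]
  have hw : w ⬝ᵥ w = ‖z₁ - z₂‖ ^ 2 := by
    rw [EuclideanSpace.norm_sq_eq]
    simp [w, dotProduct, sq]
  have hF := Matrix.sum_sq_transpose_mul_diagonal_mul_le hL hX hc hd
  have hgam : gamx = 3 * ((n : ℝ)⁻¹ * L * c) := by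
    rw [hgamx, hlamx]
    ring
  have hK : 0 ≤ (n : ℝ)⁻¹ * L * c * ‖z₁ - z₂‖ := by positivity
  calc Real.sqrt (∑ a, ∑ b, (H z₁ a b - H z₂ a b) ^ 2)
      ≤ (n : ℝ)⁻¹ * L * c * ‖z₁ - z₂‖ := by
        refine Real.sqrt_le_iff.mpr ⟨hK, ?_⟩
        simp only [hdiff, mul_pow, ← Finset.mul_sum]
        rw [hw] at hF
        simpa only [mul_assoc] using mul_le_mul_of_nonneg_left hF (sq_nonneg (n : ℝ)⁻¹)
    _ ≤ gamx * ‖z₁ - z₂‖ := by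
        rw [hgam]
        linarith
end

section
/- For every z ∈ ℝ^p, ℓ(z) ≤ (ln 2 − 1/4) + ‖Xz − c‖²/(4n), where c = 2y − 1 (the vector with entries 2y_i − 1 ∈ {−1, 1}). Consequently 0 ≤ inf_{z ∈ S} ℓ(z) ≤ (ln 2 − 1/4) + inf_{z ∈ S} ‖Xz − c‖²/(4n). -/
open scoped RealInnerProductSpace BigOperators
open Matrix

/-- The number of nonzero entries of a vector (the ℓ₀ "norm"). -/
noncomputable def norm0 {p : ℕ} (z : EuclideanSpace ℝ (Fin p)) : ℕ :=
  {i | z i ≠ 0}.ncard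

theorem log_one_add_exp_le (t : ℝ) :
    Real.log (1 + Real.exp t) ≤ Real.log 2 + t / 2 + t ^ 2 / 8 := by
  rw [Real.log_le_iff_le_exp (by positivity), Real.exp_add, Real.exp_add,
    Real.exp_log two_pos]
  have hcosh := Real.cosh_le_exp_half_sq (t / 2)
  have hsq : (t / 2) ^ 2 / 2 = t ^ 2 / 8 := by ring
  rw [hsq] at hcosh
  have hsplit : 1 + Real.exp t = 2 * Real.exp (t / 2) * Real.cosh (t / 2) := by
    have h₁ : Real.exp (t / 2) * Real.exp (t / 2) = Real.exp t := by
      rw [← Real.exp_add, add_halves]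
    have h₂ : Real.exp (t / 2) * Real.exp (-(t / 2)) = 1 := by
      rw [← Real.exp_add, add_neg_cancel, Real.exp_zero]
    rw [Real.cosh_eq]
    linear_combination -h₁ - h₂
  rw [hsplit]
  gcongr

theorem logistic_term_le (t : ℝ) {y : ℝ} (hy : y = 0 ∨ y = 1) :
    Real.log (1 + Real.exp t) - y * t ≤
      (Real.log 2 - 1 / 4) + (t - (2 * y - 1)) ^ 2 / 4 := by
  have h := log_one_add_exp_le t
  rcases hy with rfl | rfl <;> nlinarith [sq_nonneg t]

theorem logistic_term_nonneg (t : ℝ) {y : ℝ} (hy : y = 0 ∨ y = 1) :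
    0 ≤ Real.log (1 + Real.exp t) - y * t := by
  rcases hy with rfl | rfl
  · have := Real.log_nonneg (x := 1 + Real.exp t) (by linarith [Real.exp_pos t])
    linarith
  · have := (Real.le_log_iff_exp_le (x := t) (y := 1 + Real.exp t) (by positivity)).2
      (by linarith)
    linarith

/-- For every `z`, `ℓ(z) ≤ (ln 2 − 1/4) + ‖Xz − c‖²/(4n)` where
`c = 2y − 1`, and consequently
`0 ≤ inf_{z ∈ S} ℓ(z) ≤ (ln 2 − 1/4) + inf_{z ∈ S} ‖Xz − c‖²/(4n)`. -/
theorem logistic_loss_linear_bound (n p s : ℕ) (hn : 0 < n) (hs : 0 < s) (hsp : s < p)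
    (X : Matrix (Fin n) (Fin p) ℝ) (y : Fin n → ℝ)
    (hy : ∀ i, y i = 0 ∨ y i = 1)
    (ℓ : EuclideanSpace ℝ (Fin p) → ℝ)
    (hℓ : ∀ z, ℓ z = (1 / (n : ℝ)) *
      ∑ i, (Real.log (1 + Real.exp (∑ j, X i j * z j)) - y i * (∑ j, X i j * z j)))
    (c : Fin n → ℝ) (hc : ∀ i, c i = 2 * y i - 1) :
    (∀ z : EuclideanSpace ℝ (Fin p),
        ℓ z ≤ (Real.log 2 - 1 / 4) + (∑ i, ((∑ j, X i j * z j) - c i) ^ 2) / (4 * n)) ∧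
    0 ≤ (⨅ z : {z : EuclideanSpace ℝ (Fin p) // norm0 z ≤ s}, ℓ z) ∧
    (⨅ z : {z : EuclideanSpace ℝ (Fin p) // norm0 z ≤ s}, ℓ z) ≤
      (Real.log 2 - 1 / 4) +
        ⨅ z : {z : EuclideanSpace ℝ (Fin p) // norm0 z ≤ s},
          (∑ i, ((∑ j, X i j * z.1 j) - c i) ^ 2) / (4 * n) := by
  have hn' : (0 : ℝ) < n := Nat.cast_pos.2 hn
  have hbound : ∀ z : EuclideanSpace ℝ (Fin p),
      ℓ z ≤ (Real.log 2 - 1 / 4) +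
        (∑ i, ((∑ j, X i j * z j) - c i) ^ 2) / (4 * n) := by
    intro z
    have hsum := Finset.sum_le_sum fun i (_ : i ∈ Finset.univ) =>
      logistic_term_le (∑ j, X i j * z j) (hy i)
    simp only [← hc, Finset.sum_add_distrib, Finset.sum_const, Finset.card_univ,
      Fintype.card_fin, nsmul_eq_mul, ← Finset.sum_div] at hsum
    rw [hℓ, one_div_mul_eq_div, div_le_iff₀ hn']
    refine hsum.trans_eq ?_
    field_simp
  have hnonneg : ∀ z, 0 ≤ ℓ z := fun z => by
    rw [hℓ]
    exact mul_nonneg (by positivity)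
      (Finset.sum_nonneg fun i _ => logistic_term_nonneg _ (hy i))
  have : Nonempty {z : EuclideanSpace ℝ (Fin p) // norm0 z ≤ s} := ⟨0, by simp [norm0]⟩
  refine ⟨hbound, Real.iInf_nonneg fun z => hnonneg z, ?_⟩
  rw [← sub_le_iff_le_add']
  refine le_ciInf fun z => ?_
  rw [sub_le_iff_le_add']
  have hbdd : BddBelow (Set.range fun z : {z : EuclideanSpace ℝ (Fin p) // norm0 z ≤ s} => ℓ z) :=
    ⟨0, Set.forall_mem_range.2 fun z => hnonneg z⟩
  exact (ciInf_le hbdd z).trans (hbound z)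
end

section
/- If Xᵀc ≠ 0, where c = 2y − 1, then there exists a vector z̄ ∈ S such that ℓ(z̄) < ℓ(0). -/
open scoped RealInnerProductSpace BigOperators
open Matrix

theorem norm0_single_le_one {p : ℕ} (j : Fin p) (t : ℝ) :
    norm0 (EuclideanSpace.single j t) ≤ 1 := by
  have hsub : {i | (EuclideanSpace.single j t : EuclideanSpace ℝ (Fin p)) i ≠ 0} ⊆ {j} := by
    intro i hi
    by_contra hij
    rw [Set.mem_singleton_iff] at hij
    exact hi (by simp [hij])
  simpa [norm0] using Set.ncard_le_ncard hsub (Set.finite_singleton j)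

theorem hasDerivAt_log_one_add_exp_mul_sub_zero (a b : ℝ) :
    HasDerivAt (fun t : ℝ => Real.log (1 + Real.exp (a * t)) - b * (a * t))
      (-(1 / 2) * (a * (2 * b - 1))) 0 := by
  have hlin : HasDerivAt (fun t : ℝ => a * t) a 0 := by
    simpa using (hasDerivAt_id (0 : ℝ)).const_mul a
  have hne : 1 + Real.exp (a * 0) ≠ 0 := by positivity
  refine (((hlin.exp.const_add 1).log hne).sub (hlin.const_mul b)).congr_deriv ?_
  simp only [mul_zero, Real.exp_zero]
  ring

/-- If `Xᵀc ≠ 0` with `c = 2y − 1`, then there exists `z̄ ∈ S`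
with `ℓ(z̄) < ℓ(0)`. -/
theorem exists_sparse_better_than_zero (n p s : ℕ) (hn : 0 < n) (hs : 0 < s) (hsp : s < p)
    (X : Matrix (Fin n) (Fin p) ℝ) (y : Fin n → ℝ)
    (hy : ∀ i, y i = 0 ∨ y i = 1)
    (ℓ : EuclideanSpace ℝ (Fin p) → ℝ)
    (hℓ : ∀ z, ℓ z = (1 / (n : ℝ)) *
      ∑ i, (Real.log (1 + Real.exp (∑ j, X i j * z j)) - y i * (∑ j, X i j * z j)))
    (c : Fin n → ℝ) (hc : ∀ i, c i = 2 * y i - 1)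
    (hXc : Xᵀ.mulVec c ≠ 0) :
    ∃ zbar : EuclideanSpace ℝ (Fin p), norm0 zbar ≤ s ∧ ℓ zbar < ℓ 0 := by
  obtain ⟨j, hj⟩ := Function.ne_iff.mp hXc
  by_contra! hmin
  set f : ℝ → ℝ := fun t =>
    ∑ i, (Real.log (1 + Real.exp (X i j * t)) - y i * (X i j * t)) with hf
  have hℓf : ∀ t, ℓ (EuclideanSpace.single j t) = (1 / (n : ℝ)) * f t := by
    intro t
    simp [hℓ, hf]
  have hfmin : ∀ t, f 0 ≤ f t := by
    intro t
    have h := hmin (EuclideanSpace.single j t) ((norm0_single_le_one j t).trans hs)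
    have hzero : ℓ 0 = (1 / (n : ℝ)) * f 0 := by simp [hℓ, hf]
    rw [hzero, hℓf] at h
    exact le_of_mul_le_mul_left h (by positivity)
  have hderiv : HasDerivAt f (-(1 / 2) * (Xᵀ.mulVec c) j) 0 := by
    have h := HasDerivAt.fun_sum (u := Finset.univ) fun i _ =>
      hasDerivAt_log_one_add_exp_mul_sub_zero (X i j) (y i)
    simpa only [hf, mulVec, dotProduct, transpose_apply, hc, Finset.mul_sum] using h
  have hlocal : IsLocalMin f 0 := Filter.Eventually.of_forall hfmin
  have := hlocal.hasDerivAt_eq_zero hderiv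
  exact hj (by simpa using this)
end

section
/- If Xᵀc = 0, where c = 2y − 1, then the zero vector is a global minimizer of ℓ over S, i.e., ℓ(0) ≤ ℓ(z) for every z ∈ S; moreover 0 minimizes ‖Xz − c‖² over S. -/
open scoped RealInnerProductSpace BigOperators
open Matrix

/-- The softplus function lies above its tangent line at `0`. -/
theorem log_two_add_half_le_log_one_add_exp (t : ℝ) :
    Real.log 2 + t / 2 ≤ Real.log (1 + Real.exp t) := by
  rw [Real.le_log_iff_exp_le (by positivity), Real.exp_add, Real.exp_log two_pos]
  have h : Real.exp t = Real.exp (t / 2) ^ 2 := by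
    rw [← Real.exp_nat_mul]
    congr 1
    push_cast
    ring
  rw [h]
  nlinarith [sq_nonneg (Real.exp (t / 2) - 1)]

/-- A vector in the kernel of `Xᵀ` is orthogonal to the range of `X`. -/
theorem sum_mul_sum_eq_zero_of_transpose_mulVec_eq_zero {m k : Type*} [Fintype m] [Fintype k]
    {X : Matrix m k ℝ} {c : m → ℝ} (hXc : Xᵀ.mulVec c = 0) (z : k → ℝ) :
    ∑ i, c i * ∑ j, X i j * z j = 0 := by
  change c ⬝ᵥ X.mulVec z = 0
  rw [Matrix.dotProduct_mulVec, ← Matrix.mulVec_transpose, hXc, zero_dotProduct]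

/-- If `Xᵀc = 0` with `c = 2y − 1`, then `0` is a global minimizer
of ℓ over the sparse set `S`, and `0` also minimizes `‖Xz − c‖²` over `S`. -/
theorem zero_global_minimizer (n p s : ℕ) (hn : 0 < n) (hs : 0 < s) (hsp : s < p)
    (X : Matrix (Fin n) (Fin p) ℝ) (y : Fin n → ℝ)
    (hy : ∀ i, y i = 0 ∨ y i = 1)
    (ℓ : EuclideanSpace ℝ (Fin p) → ℝ)
    (hℓ : ∀ z, ℓ z = (1 / (n : ℝ)) *
      ∑ i, (Real.log (1 + Real.exp (∑ j, X i j * z j)) - y i * (∑ j, X i j * z j)))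
    (c : Fin n → ℝ) (hc : ∀ i, c i = 2 * y i - 1)
    (hXc : Xᵀ.mulVec c = 0) :
    (∀ z : EuclideanSpace ℝ (Fin p), norm0 z ≤ s → ℓ 0 ≤ ℓ z) ∧
    (∀ z : EuclideanSpace ℝ (Fin p), norm0 z ≤ s →
      ∑ i, (0 - c i) ^ 2 ≤ ∑ i, ((∑ j, X i j * z j) - c i) ^ 2) := by
  have horth (z : EuclideanSpace ℝ (Fin p)) : ∑ i, c i * ∑ j, X i j * z j = 0 :=
    sum_mul_sum_eq_zero_of_transpose_mulVec_eq_zero hXc z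
  refine ⟨fun z _ => ?_, fun z _ => ?_⟩
  · rw [hℓ, hℓ]
    refine mul_le_mul_of_nonneg_left ?_ (by positivity)
    calc
      _ = ∑ _i : Fin n, Real.log 2 := by norm_num
      _ = ∑ i, (Real.log 2 - 1 / 2 * (c i * ∑ j, X i j * z j)) := by
        rw [Finset.sum_sub_distrib, ← Finset.mul_sum, horth z, mul_zero, sub_zero]
      _ ≤ _ := by
        refine Finset.sum_le_sum fun i _ => ?_
        rw [hc]
        linarith [log_two_add_half_le_log_one_add_exp (∑ j, X i j * z j)]
  · calc
      _ = ∑ i, ((0 - c i) ^ 2 - 2 * (c i * ∑ j, X i j * z j)) := by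
        rw [Finset.sum_sub_distrib, ← Finset.mul_sum, horth z, mul_zero, sub_zero]
      _ ≤ _ := by
        refine Finset.sum_le_sum fun i _ => ?_
        linarith [sq_nonneg (∑ j, X i j * z j),
          sub_sq (∑ j, X i j * z j) (c i), sub_sq 0 (c i)]
end

section
/- For a given τ > 0, a vector z ∈ ℝ^p is a strong τ-stationary point of the sparsity constrained logistic regression problem if and only if either (i) ‖z‖₀ < s and ∇ℓ(z) = 0, or (ii) ‖z‖₀ = s, ∇_i ℓ(z) = 0 for every i in the support of z, and |∇_i ℓ(z)| < (1/τ) · min_{j ∈ supp(z)} |z_j| for every i not in the support of z. -/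
open scoped RealInnerProductSpace BigOperators
open Matrix

/-- The Euclidean projection of `w` onto the sparse set `S = {x : ‖x‖₀ ≤ s}`:
the set of points of `S` nearest to `w`. -/
noncomputable def projS {p : ℕ} (s : ℕ) (w : EuclideanSpace ℝ (Fin p)) :
    Set (EuclideanSpace ℝ (Fin p)) :=
  {x | norm0 x ≤ s ∧ ∀ x' : EuclideanSpace ℝ (Fin p), norm0 x' ≤ s → ‖w - x‖ ≤ ‖w - x'‖}

section SparseProjection

variable {p s : ℕ} {w x z : EuclideanSpace ℝ (Fin p)}

lemma norm_sub_le_norm_sub_iff_sum_sq :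
    ‖w - x‖ ≤ ‖w - z‖ ↔ ∑ i, (w i - x i) ^ 2 ≤ ∑ i, (w i - z i) ^ 2 := by
  rw [← sq_le_sq₀ (norm_nonneg _) (norm_nonneg _), EuclideanSpace.real_norm_sq_eq,
    EuclideanSpace.real_norm_sq_eq]
  simp

lemma cast_norm0_eq_sum (z : EuclideanSpace ℝ (Fin p)) :
    (norm0 z : ℝ) = ∑ i, if z i ≠ 0 then 1 else 0 := by
  classical
  rw [norm0, Set.ncard_eq_toFinset_card', Finset.sum_boole]
  simp

lemma eq_of_projS_eq_singleton (h : projS s w = {z}) (hx : norm0 x ≤ s)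
    (hle : ∑ i, (w i - x i) ^ 2 ≤ ∑ i, (w i - z i) ^ 2) : x = z := by
  have hz : z ∈ projS s w := h ▸ Set.mem_singleton z
  have hmem : x ∈ projS s w :=
    ⟨hx, fun x' hx' => (norm_sub_le_norm_sub_iff_sum_sq.2 hle).trans (hz.2 x' hx')⟩
  rwa [h] at hmem

/-- If changing the `i`-th entry of a unique projection keeps it in the sparse set, then
that entry agrees with the projected vector. -/
lemma apply_eq_of_projS_eq_singleton (h : projS s w = {z}) {i : Fin p}
    (hi : norm0 z < s ∨ z i ≠ 0) : w i = z i := by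
  have hz : z ∈ projS s w := h ▸ Set.mem_singleton z
  let x : EuclideanSpace ℝ (Fin p) := WithLp.toLp 2 fun k => if k = i then w i else z k
  have hxk : ∀ k, x k = if k = i then w i else z k := fun _ => rfl
  have hsupp : {k | x k ≠ 0} ⊆ insert i {k | z k ≠ 0} := by
    intro k hk
    by_cases hki : k = i
    · exact Or.inl hki
    · refine Or.inr ?_
      simpa [hxk, hki] using hk
  have hx : norm0 x ≤ s := by
    refine (Set.ncard_le_ncard hsupp (Set.toFinite _)).trans ?_
    rcases hi with hi | hi
    · exact (Set.ncard_insert_le _ _).trans hi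
    · rw [Set.insert_eq_of_mem (show i ∈ {k | z k ≠ 0} from hi)]
      exact hz.1
  have hxz : x = z := by
    refine eq_of_projS_eq_singleton h hx (Finset.sum_le_sum fun k _ => ?_)
    rw [hxk]
    split_ifs with hki
    · subst hki
      simpa using sq_nonneg (w k - z k)
    · exact le_rfl
  have := hxk i
  rw [hxz] at this
  simpa using this.symm

/-- Off the support of a unique projection, the projected vector is strictly smaller than
every nonzero entry of the projection. -/
lemma abs_lt_of_projS_eq_singleton (h : projS s w = {z}) {i j : Fin p}
    (hi : z i = 0) (hj : z j ≠ 0) : |w i| < |z j| := by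
  have hz : z ∈ projS s w := h ▸ Set.mem_singleton z
  have hij : i ≠ j := fun hij => hj (hij ▸ hi)
  have hwj : w j = z j := apply_eq_of_projS_eq_singleton h (Or.inr hj)
  by_contra! hle
  have hsq : z j ^ 2 ≤ w i ^ 2 := sq_le_sq.2 hle
  let x : EuclideanSpace ℝ (Fin p) :=
    WithLp.toLp 2 fun k => if k = i then w i else if k = j then 0 else z k
  have hxk : ∀ k, x k = if k = i then w i else if k = j then 0 else z k := fun _ => rfl
  have hsupp : {k | x k ≠ 0} ⊆ insert i ({k | z k ≠ 0} \ {j}) := by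
    intro k hk
    by_cases hki : k = i
    · exact Or.inl hki
    · refine Or.inr ?_
      simpa [hxk, hki, and_comm] using hk
  have hx : norm0 x ≤ s := by
    refine (Set.ncard_le_ncard hsupp (Set.toFinite _)).trans
      ((Set.ncard_insert_le _ _).trans ?_)
    rw [Set.ncard_sdiff_singleton_add_one (show j ∈ {k | z k ≠ 0} from hj)]
    exact hz.1
  have hsum : ∑ k, (w k - x k) ^ 2 =
      ∑ k, ((w k - z k) ^ 2 + ((if k = j then z j ^ 2 else 0) - if k = i then w i ^ 2 else 0)) := by
    refine Finset.sum_congr rfl fun k _ => ?_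
    rw [hxk]
    by_cases hki : k = i
    · subst hki
      simp [hij, hi]
    · by_cases hkj : k = j
      · subst hkj
        simp [hki, hwj]
      · simp [hki, hkj]
  have hxz : x = z := by
    refine eq_of_projS_eq_singleton h hx ?_
    rw [hsum, Finset.sum_add_distrib, Finset.sum_sub_distrib]
    simpa using hsq
  have := hxk j
  rw [hxz] at this
  exact hj (by simpa [hij.symm] using this)

/-- A vector agreeing with `w` on its support, whose nonzero entries dominate the remaining
entries of `w`, is strictly closer to `w` than any other vector of at most its sparsity. -/
lemma sum_sq_lt_of_norm0_le (hon : ∀ i, z i ≠ 0 → w i = z i)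
    (hoff : ∀ i j, z i = 0 → z j ≠ 0 → |w i| < |z j|) (hx : norm0 x ≤ norm0 z) (hxz : x ≠ z) :
    ∑ i, (w i - z i) ^ 2 < ∑ i, (w i - x i) ^ 2 := by
  classical
  rcases Set.eq_empty_or_nonempty {j | z j ≠ 0} with hT | ⟨j₀, hj₀⟩
  · have hz0 : norm0 z = 0 := by rw [norm0, hT, Set.ncard_empty]
    have hX : {j | x j ≠ 0} = ∅ := (Set.ncard_eq_zero (Set.toFinite _)).1 (by
      have : norm0 x = 0 := by omega
      exact this)
    refine absurd ?_ hxz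
    ext k
    have h₁ : x k = 0 := by
      by_contra hk
      exact (Set.eq_empty_iff_forall_notMem.1 hX k) hk
    have h₂ : z k = 0 := by
      by_contra hk
      exact (Set.eq_empty_iff_forall_notMem.1 hT k) hk
    rw [h₁, h₂]
  obtain ⟨m, hm₁, hm₂⟩ := Finset.exists_between
    (s := insert 0 ((Finset.univ.filter fun i => z i = 0).image fun i => |w i|))
    (t := (Finset.univ.filter fun j => z j ≠ 0).image fun j => |z j|)
    (Finset.insert_nonempty _ _)
    (Finset.Nonempty.image ⟨j₀, by simpa using hj₀⟩ _) (by
      intro a ha b hb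
      obtain ⟨j, hj, rfl⟩ := Finset.mem_image.1 hb
      have hj : z j ≠ 0 := by simpa using hj
      rcases Finset.mem_insert.1 ha with rfl | ha
      · exact abs_pos.2 hj
      · obtain ⟨i, hi, rfl⟩ := Finset.mem_image.1 ha
        exact hoff i j (by simpa using hi) hj)
  have hm0 : 0 < m := hm₁ 0 (Finset.mem_insert_self _ _)
  have hwm : ∀ i, z i = 0 → w i ^ 2 < m ^ 2 := fun i hi =>
    sq_lt_sq.2 ((hm₁ _ (Finset.mem_insert_of_mem
      (Finset.mem_image_of_mem _ (by simpa using hi)))).trans_le (le_abs_self m))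
  have hmz : ∀ j, z j ≠ 0 → m ^ 2 < z j ^ 2 := fun j hj =>
    sq_lt_sq.2 (by
      rw [abs_of_pos hm0]
      exact hm₂ _ (Finset.mem_image_of_mem _ (by simpa using hj)))
  have hlt : ∀ i, x i ≠ z i → (w i - z i) ^ 2 +
      m ^ 2 * ((if z i ≠ 0 then 1 else 0) - if x i ≠ 0 then 1 else 0) < (w i - x i) ^ 2 := by
    intro i hne
    by_cases hzi : z i = 0
    · have hxi : x i ≠ 0 := fun h => hne (h.trans hzi.symm)
      have := hwm i hzi
      rw [if_neg (not_not.2 hzi), if_pos hxi, hzi]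
      nlinarith [sq_nonneg (w i - x i)]
    · rw [hon i hzi]
      by_cases hxi : x i = 0
      · simpa [hzi, hxi] using hmz i hzi
      · have : 0 < (z i - x i) ^ 2 := by
          have := sub_ne_zero.2 hne.symm
          positivity
        simpa [hzi, hxi] using this
  obtain ⟨k, hk⟩ : ∃ k, x k ≠ z k := by
    by_contra! hall
    exact hxz (by ext k; exact hall k)
  have hsum := Finset.sum_lt_sum (s := Finset.univ)
    (f := fun i => (w i - z i) ^ 2 +
      m ^ 2 * ((if z i ≠ 0 then 1 else 0) - if x i ≠ 0 then 1 else 0))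
    (g := fun i => (w i - x i) ^ 2)
    (fun i _ => by
      by_cases hi : x i = z i
      · simp [hi]
      · exact (hlt i hi).le)
    ⟨k, Finset.mem_univ k, hlt k hk⟩
  rw [Finset.sum_add_distrib, ← Finset.mul_sum, Finset.sum_sub_distrib, ← cast_norm0_eq_sum,
    ← cast_norm0_eq_sum] at hsum
  have hcast : (norm0 x : ℝ) ≤ norm0 z := by exact_mod_cast hx
  nlinarith [mul_nonneg (sq_nonneg m) (sub_nonneg.2 hcast)]

/-- Characterization of unique projections onto the sparse set. -/
lemma projS_eq_singleton_iff : projS s w = {z} ↔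
    (norm0 z < s ∧ w = z) ∨
    (norm0 z = s ∧ (∀ i, z i ≠ 0 → w i = z i) ∧
      ∀ i j, z i = 0 → z j ≠ 0 → |w i| < |z j|) := by
  constructor
  · intro h
    have hz : z ∈ projS s w := h ▸ Set.mem_singleton z
    rcases hz.1.lt_or_eq with hlt | heq
    · refine Or.inl ⟨hlt, ?_⟩
      ext i
      exact apply_eq_of_projS_eq_singleton h (Or.inl hlt)
    · exact Or.inr ⟨heq, fun i hi => apply_eq_of_projS_eq_singleton h (Or.inr hi),
        fun i j hi hj => abs_lt_of_projS_eq_singleton h hi hj⟩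
  · rintro (⟨hlt, rfl⟩ | ⟨rfl, hon, hoff⟩)
    · refine Set.eq_singleton_iff_unique_mem.2 ⟨⟨hlt.le, fun x' _ => by simp⟩, fun x hx => ?_⟩
      have := hx.2 w hlt.le
      rw [sub_self, norm_zero, norm_le_zero_iff, sub_eq_zero] at this
      exact this.symm
    · refine Set.eq_singleton_iff_unique_mem.2 ⟨⟨le_rfl, fun x' hx' => ?_⟩, fun x hx => ?_⟩
      · rcases eq_or_ne x' z with rfl | hne
        · exact le_rfl
        · exact norm_sub_le_norm_sub_iff_sum_sq.2 (sum_sq_lt_of_norm0_le hon hoff hx' hne).le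
      · by_contra hne
        exact (sum_sq_lt_of_norm0_le hon hoff hx.1 hne).not_ge
          (norm_sub_le_norm_sub_iff_sum_sq.1 (hx.2 z le_rfl))

lemma lt_sInf_abs_iff (hz : 0 < norm0 z) (a : ℝ) :
    a < sInf {r : ℝ | ∃ j, z j ≠ 0 ∧ r = |z j|} ↔ ∀ j, z j ≠ 0 → a < |z j| := by
  have hset : {r : ℝ | ∃ j, z j ≠ 0 ∧ r = |z j|} = (fun j => |z j|) '' {j | z j ≠ 0} := by
    ext r
    simp [eq_comm]
  have hne : {j | z j ≠ 0}.Nonempty := (Set.ncard_pos (Set.toFinite _)).1 hz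
  rw [hset, Set.Finite.lt_csInf_iff ((Set.toFinite _).image _) (hne.image _)]
  simp

end SparseProjection

/-- `z` is a strong τ-stationary point iff either `‖z‖₀ < s` and
`∇ℓ(z) = 0`, or `‖z‖₀ = s`, `∇ᵢℓ(z) = 0` on the support of `z`, and
`|∇ᵢℓ(z)| < (1/τ)·min_{j ∈ supp z} |z_j|` off the support. -/
theorem strong_stationary_iff (n p s : ℕ) (hn : 0 < n) (hs : 0 < s) (hsp : s < p)
    (X : Matrix (Fin n) (Fin p) ℝ) (y : Fin n → ℝ)
    (hy : ∀ i, y i = 0 ∨ y i = 1)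
    (ℓ : EuclideanSpace ℝ (Fin p) → ℝ)
    (hℓ : ∀ z, ℓ z = (1 / (n : ℝ)) *
      ∑ i, (Real.log (1 + Real.exp (∑ j, X i j * z j)) - y i * (∑ j, X i j * z j)))
    (τ : ℝ) (hτ : 0 < τ) (z : EuclideanSpace ℝ (Fin p)) :
    projS s (z - τ • gradient ℓ z) = {z} ↔
      (norm0 z < s ∧ gradient ℓ z = 0) ∨
      (norm0 z = s ∧ (∀ i, z i ≠ 0 → gradient ℓ z i = 0) ∧
        ∀ i, z i = 0 →
          |gradient ℓ z i| < (1 / τ) * sInf {r : ℝ | ∃ j, z j ≠ 0 ∧ r = |z j|}) := by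
  set g := gradient ℓ z
  have hw : ∀ i, (z - τ • g) i = z i - τ * g i := fun i => by simp
  rw [projS_eq_singleton_iff]
  refine or_congr (and_congr_right fun _ => ?_) (and_congr_right fun hzs => and_congr ?_ ?_)
  · rw [sub_eq_self, smul_eq_zero_iff_right hτ.ne']
  · refine forall₂_congr fun i _ => ?_
    rw [hw, sub_eq_self, mul_eq_zero_iff_left hτ.ne']
  · have key : ∀ i, z i = 0 → (|g i| < 1 / τ * sInf {r : ℝ | ∃ j, z j ≠ 0 ∧ r = |z j|} ↔
        ∀ j, z j ≠ 0 → |(z - τ • g) i| < |z j|) := fun i hi => by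
      rw [← lt_sInf_abs_iff (hzs ▸ hs), hw, hi, zero_sub, abs_neg, abs_mul, abs_of_pos hτ,
        one_div, lt_inv_mul_iff₀ hτ]
    exact ⟨fun h i hi => (key i hi).2 fun j => h i j hi,
      fun h i j hi => (key i hi).1 (h i hi) j⟩
end

section
/- Let z* be a strong τ-stationary point for some τ > 0 with ‖z*‖₀ = s. Then z* is a local minimizer of ℓ over S: there is δ > 0 such that ℓ(z) ≥ ℓ(z*) for all z ∈ S with ‖z − z*‖ < δ. If in addition ∇ℓ(z*) = 0, then z* is a global minimizer of ℓ over S. -/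
open scoped RealInnerProductSpace BigOperators
open Matrix

/-- The map `t ↦ log (1 + exp t)` has derivative `sigmoid`. -/
lemma hasDerivAt_log_one_add_exp (t : ℝ) :
    HasDerivAt (fun t => Real.log (1 + Real.exp t)) (Real.sigmoid t) t := by
  have hpos : 0 < 1 + Real.exp t := by positivity
  convert ((Real.hasDerivAt_exp t).const_add 1).log hpos.ne' using 1
  rw [Real.sigmoid_def, Real.exp_neg]
  field_simp
  ring

/-- The map `t ↦ log (1 + exp t)` is convex. -/
lemma convexOn_log_one_add_exp :
    ConvexOn ℝ Set.univ (fun t : ℝ => Real.log (1 + Real.exp t)) := by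
  refine Monotone.convexOn_univ_of_deriv
    (fun t => (hasDerivAt_log_one_add_exp t).differentiableAt) ?_
  rw [show deriv (fun t : ℝ => Real.log (1 + Real.exp t)) = Real.sigmoid from
    funext fun t => (hasDerivAt_log_one_add_exp t).deriv]
  exact Real.sigmoid_monotone

/-- First-order characterization of convexity: a convex function lies above its tangent
hyperplanes. -/
lemma ConvexOn.add_inner_gradient_le {E : Type*} [NormedAddCommGroup E] [InnerProductSpace ℝ E]
    [CompleteSpace E] {f : E → ℝ} (hf : ConvexOn ℝ Set.univ f) {x : E}
    (hd : DifferentiableAt ℝ f x) (z : E) : f x + ⟪gradient f x, z - x⟫ ≤ f z := by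
  have hline : ConvexOn ℝ Set.univ (f ∘ AffineMap.lineMap (k := ℝ) x z) := by
    simpa using hf.comp_affineMap (AffineMap.lineMap (k := ℝ) x z)
  have hderiv : HasDerivAt (f ∘ AffineMap.lineMap (k := ℝ) x z) ⟪gradient f x, z - x⟫ 0 := by
    have hx : HasFDerivAt f (InnerProductSpace.toDual ℝ E (gradient f x))
        (AffineMap.lineMap (k := ℝ) x z 0) := by
      simpa using hd.hasGradientAt.hasFDerivAt
    simpa using hx.comp_hasDerivAt (0 : ℝ) AffineMap.hasDerivAt_lineMap
  have hslope := hline.le_slope_of_hasDerivAt (Set.mem_univ 0) (Set.mem_univ 1) one_pos hderiv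
  simp only [slope_def_field, Function.comp_apply, AffineMap.lineMap_apply_zero,
    AffineMap.lineMap_apply_one, sub_zero, div_one] at hslope
  linarith

section LogisticLoss

variable {n p : ℕ} (X : Matrix (Fin n) (Fin p) ℝ) (y : Fin n → ℝ)

/-- The logistic loss with design matrix `X` and labels `y`. -/
noncomputable def logisticLoss (z : EuclideanSpace ℝ (Fin p)) : ℝ :=
  (1 / (n : ℝ)) *
    ∑ i, (Real.log (1 + Real.exp (∑ j, X i j * z j)) - y i * (∑ j, X i j * z j))

lemma differentiable_logisticLoss : Differentiable ℝ (logisticLoss X y) := by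
  unfold logisticLoss
  have hlin (i : Fin n) :
      Differentiable ℝ fun z : EuclideanSpace ℝ (Fin p) => ∑ j, X i j * z j := by
    fun_prop
  refine Differentiable.const_mul (Differentiable.fun_sum fun i _ => ?_) _
  exact (((hlin i).exp.const_add 1).log fun z => by positivity).sub ((hlin i).const_mul _)

lemma convexOn_logisticLoss : ConvexOn ℝ Set.univ (logisticLoss X y) := by
  refine ⟨convex_univ, fun u _ v _ a b ha hb hab => ?_⟩
  have hlin (i : Fin n) : ∑ j, X i j * (a • u + b • v) j =
      a * ∑ j, X i j * u j + b * ∑ j, X i j * v j := by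
    simp only [PiLp.add_apply, PiLp.smul_apply, smul_eq_mul, Finset.mul_sum,
      ← Finset.sum_add_distrib]
    exact Finset.sum_congr rfl fun j _ => by ring
  simp only [logisticLoss, smul_eq_mul, hlin]
  rw [mul_left_comm a, mul_left_comm b, ← mul_add]
  refine mul_le_mul_of_nonneg_left ?_ (by positivity)
  rw [Finset.mul_sum, Finset.mul_sum, ← Finset.sum_add_distrib]
  refine Finset.sum_le_sum fun i _ => ?_
  have hconv := convexOn_log_one_add_exp.2 (Set.mem_univ (∑ j, X i j * u j))
    (Set.mem_univ (∑ j, X i j * v j)) ha hb hab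
  simp only [smul_eq_mul] at hconv
  linarith

end LogisticLoss

/-- If `x` is a projection of `x - g` onto the sparse set, then `g` vanishes on the support
of `x`. -/
lemma apply_eq_zero_of_mem_projS {p s : ℕ} {x g : EuclideanSpace ℝ (Fin p)}
    (hx : x ∈ projS s (x - g)) {i : Fin p} (hi : x i ≠ 0) : g i = 0 := by
  have hsupp : norm0 (x - EuclideanSpace.single i (g i)) ≤ s := by
    refine (Set.ncard_le_ncard (fun j hj => ?_) (Set.toFinite _)).trans hx.1
    by_cases hji : j = i
    · simpa [hji] using hi
    · simpa [hji] using hj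
  have hle := hx.2 _ hsupp
  have hsq := pow_le_pow_left₀ (norm_nonneg _) hle 2
  rw [sub_sub_cancel_left, norm_neg, sub_sub_sub_cancel_left, norm_sub_rev,
    norm_sub_sq_real] at hsq
  simp [EuclideanSpace.inner_single_right] at hsq
  nlinarith [sq_nonneg (g i)]

/-- Sufficiently near `x`, every vector with at most as many nonzero entries as `x` vanishes
where `x` does. -/
lemma exists_pos_forall_norm_sub_lt_apply_eq_zero {p : ℕ} (x : EuclideanSpace ℝ (Fin p)) :
    ∃ δ > (0 : ℝ), ∀ z : EuclideanSpace ℝ (Fin p), norm0 z ≤ norm0 x → ‖z - x‖ < δ →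
      ∀ i, x i = 0 → z i = 0 := by
  have hev : ∀ᶠ z in nhds x, ∀ i, x i ≠ 0 → z i ≠ 0 := by
    refine Filter.eventually_all.2 fun i => ?_
    by_cases hi : x i = 0
    · simp [hi]
    · have hc : ContinuousAt (fun z : EuclideanSpace ℝ (Fin p) => z i) x := by fun_prop
      exact (hc.eventually_ne hi).mono fun z hz _ => hz
  obtain ⟨δ, hδ, hball⟩ := Metric.eventually_nhds_iff.1 hev
  refine ⟨δ, hδ, fun z hz hzx i hi => ?_⟩
  have hsub : {i | x i ≠ 0} ⊆ {i | z i ≠ 0} := fun i hi => hball (by rwa [dist_eq_norm]) i hi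
  have heq := Set.eq_of_subset_of_ncard_le hsub hz (Set.toFinite _)
  by_contra hzi
  exact (heq.symm ▸ (show i ∈ {i | z i ≠ 0} from hzi) : i ∈ {i | x i ≠ 0}) hi

/-- a strong τ-stationary point `z*` with `‖z*‖₀ = s` is a local
minimizer of ℓ over S; if moreover `∇ℓ(z*) = 0` it is a global minimizer. -/
theorem strong_stationary_full_support_local_minimizer (n p s : ℕ)
    (hn : 0 < n) (hs : 0 < s) (hsp : s < p)
    (X : Matrix (Fin n) (Fin p) ℝ) (y : Fin n → ℝ)
    (hy : ∀ i, y i = 0 ∨ y i = 1)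
    (ℓ : EuclideanSpace ℝ (Fin p) → ℝ)
    (hℓ : ∀ z, ℓ z = (1 / (n : ℝ)) *
      ∑ i, (Real.log (1 + Real.exp (∑ j, X i j * z j)) - y i * (∑ j, X i j * z j)))
    (τ : ℝ) (hτ : 0 < τ) (zs : EuclideanSpace ℝ (Fin p))
    (hstat : projS s (zs - τ • gradient ℓ zs) = {zs})
    (hcard : norm0 zs = s) :
    (∃ δ > (0 : ℝ), ∀ z : EuclideanSpace ℝ (Fin p),
        norm0 z ≤ s → ‖z - zs‖ < δ → ℓ zs ≤ ℓ z) ∧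
    (gradient ℓ zs = 0 →
      ∀ z : EuclideanSpace ℝ (Fin p), norm0 z ≤ s → ℓ zs ≤ ℓ z) := by
  obtain rfl : ℓ = logisticLoss X y := funext hℓ
  have htangent (z : EuclideanSpace ℝ (Fin p)) :=
    (convexOn_logisticLoss X y).add_inner_gradient_le (differentiable_logisticLoss X y zs) z
  refine ⟨?_, fun hgrad z _ => by simpa [hgrad] using htangent z⟩
  have hmem : zs ∈ projS s (zs - τ • gradient (logisticLoss X y) zs) := by simp [hstat]
  obtain ⟨δ, hδ, hsupp⟩ := exists_pos_forall_norm_sub_lt_apply_eq_zero zs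
  refine ⟨δ, hδ, fun z hz hzδ => ?_⟩
  have hinner : ⟪gradient (logisticLoss X y) zs, z - zs⟫ = 0 := by
    rw [PiLp.inner_apply]
    refine Finset.sum_eq_zero fun i _ => ?_
    by_cases hi : zs i = 0
    · simp [hi, hsupp z (hz.trans_eq hcard.symm) hzδ i hi]
    · have hgi := apply_eq_zero_of_mem_projS hmem hi
      have : gradient (logisticLoss X y) zs i = 0 := by simpa [hτ.ne'] using hgi
      simp [this]
  simpa [hinner] using htangent z
end

section
/- Let z* be a strong τ-stationary point for some τ > 0 with ‖z*‖₀ < s. Then z* is a global minimizer of ℓ over S: ℓ(z) ≥ ℓ(z*) for every z ∈ S. -/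
open scoped RealInnerProductSpace BigOperators
open Matrix

/-- Tangent-line inequality for the softplus function `t ↦ log (1 + exp t)`. -/
lemma softplus_tangent_le (a b : ℝ) :
    Real.log (1 + Real.exp a) + Real.exp a / (1 + Real.exp a) * (b - a)
      ≤ Real.log (1 + Real.exp b) := by
  have ha : 0 < 1 + Real.exp a := by positivity
  have hconv := convexOn_exp.2 (Set.mem_univ 0) (Set.mem_univ (b - a))
    (show 0 ≤ 1 / (1 + Real.exp a) by positivity)
    (show 0 ≤ Real.exp a / (1 + Real.exp a) by positivity) (by field_simp)
  simp only [smul_eq_mul, mul_zero, zero_add, Real.exp_zero, mul_one] at hconv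
  rw [Real.le_log_iff_exp_le (by positivity), Real.exp_add, Real.exp_log ha]
  refine (mul_le_mul_of_nonneg_left hconv ha.le).trans_eq ?_
  rw [Real.exp_sub]
  field_simp

lemma hasDerivAt_softplus (a : ℝ) :
    HasDerivAt (fun t => Real.log (1 + Real.exp t)) (Real.exp a / (1 + Real.exp a)) a :=
  ((Real.hasDerivAt_exp a).const_add 1).log (by positivity)

/-- The logistic loss lies above its linearization at every point. -/
lemma logistic_loss_tangent_le {n p : ℕ} (X : Matrix (Fin n) (Fin p) ℝ) (y : Fin n → ℝ)
    (ℓ : EuclideanSpace ℝ (Fin p) → ℝ)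
    (hℓ : ∀ z, ℓ z = (1 / (n : ℝ)) *
      ∑ i, (Real.log (1 + Real.exp (∑ j, X i j * z j)) - y i * (∑ j, X i j * z j)))
    (a z : EuclideanSpace ℝ (Fin p)) :
    ℓ a + ⟪gradient ℓ a, z - a⟫ ≤ ℓ z := by
  let A : Fin n → EuclideanSpace ℝ (Fin p) →L[ℝ] ℝ :=
    fun i => ∑ j, X i j • EuclideanSpace.proj j
  have hA : ∀ i v, ∑ j, X i j * v j = A i v := fun i v => by simp [A]
  simp only [hA] at hℓ
  have hderiv : HasFDerivAt ℓ ((1 / (n : ℝ)) • ∑ i,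
      ((Real.exp (A i a) / (1 + Real.exp (A i a))) • A i - y i • A i)) a := by
    rw [funext hℓ]
    refine HasFDerivAt.const_mul (HasFDerivAt.fun_sum fun i _ => ?_) _
    exact ((hasDerivAt_softplus (A i a)).comp_hasFDerivAt a (A i).hasFDerivAt).sub
      ((A i).hasFDerivAt.const_mul (y i))
  rw [gradient, InnerProductSpace.toDual_symm_apply, hderiv.fderiv, hℓ, hℓ]
  simp only [_root_.smul_apply, _root_.sum_apply, _root_.sub_apply, smul_eq_mul]
  rw [← mul_add, ← Finset.sum_add_distrib]
  refine mul_le_mul_of_nonneg_left (Finset.sum_le_sum fun i _ => ?_) (by positivity)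
  rw [map_sub]
  linarith [softplus_tangent_le (A i a) (A i z)]

/-- Changing one coordinate raises the number of nonzero entries by at most one. -/
lemma norm0_add_single_le {p : ℕ} (z : EuclideanSpace ℝ (Fin p)) (j : Fin p) (c : ℝ) :
    norm0 (z + EuclideanSpace.single j c) ≤ norm0 z + 1 := by
  unfold norm0
  refine (Set.ncard_le_ncard (t := insert j {i | z i ≠ 0}) ?_ (Set.toFinite _)).trans
    (Set.ncard_insert_le _ _)
  intro i hi
  by_cases hij : i = j
  · exact Or.inl hij
  · right
    simpa [hij] using hi

/-- A point with fewer than `s` nonzero entries that is a projection of `z + v` onto the sparse set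
forces `v = 0`. -/
lemma eq_zero_of_mem_projS_add {p s : ℕ} {z v : EuclideanSpace ℝ (Fin p)}
    (hmem : z ∈ projS s (z + v)) (hcard : norm0 z < s) : v = 0 := by
  ext j
  have hle := hmem.2 (z + EuclideanSpace.single j (v j))
    ((norm0_add_single_le z j (v j)).trans hcard)
  rw [add_sub_cancel_left, add_sub_add_left_eq_sub] at hle
  have hsq := pow_le_pow_left₀ (norm_nonneg _) hle 2
  rw [norm_sub_sq_real, EuclideanSpace.inner_single_right, PiLp.norm_single] at hsq
  simp only [conj_trivial, Real.norm_eq_abs, sq_abs] at hsq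
  have : v j ^ 2 ≤ 0 := by nlinarith
  simpa using this

/-- a strong τ-stationary point `z*` with `‖z*‖₀ < s` is a global
minimizer of ℓ over S. -/
theorem strong_stationary_small_support_global_minimizer (n p s : ℕ)
    (hn : 0 < n) (hs : 0 < s) (hsp : s < p)
    (X : Matrix (Fin n) (Fin p) ℝ) (y : Fin n → ℝ)
    (hy : ∀ i, y i = 0 ∨ y i = 1)
    (ℓ : EuclideanSpace ℝ (Fin p) → ℝ)
    (hℓ : ∀ z, ℓ z = (1 / (n : ℝ)) *
      ∑ i, (Real.log (1 + Real.exp (∑ j, X i j * z j)) - y i * (∑ j, X i j * z j)))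
    (τ : ℝ) (hτ : 0 < τ) (zs : EuclideanSpace ℝ (Fin p))
    (hstat : projS s (zs - τ • gradient ℓ zs) = {zs})
    (hcard : norm0 zs < s) :
    ∀ z : EuclideanSpace ℝ (Fin p), norm0 z ≤ s → ℓ zs ≤ ℓ z := by
  intro z _
  have hmem : zs ∈ projS s (zs + -(τ • gradient ℓ zs)) := by
    rw [← sub_eq_add_neg, hstat]
    exact Set.mem_singleton zs
  have hgrad : gradient ℓ zs = 0 := by
    simpa [hτ.ne'] using eq_zero_of_mem_projS_add hmem hcard
  simpa [hgrad] using logistic_loss_tangent_le X y ℓ hℓ zs z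
end

section
/- Fix τ > 0, let z ∈ ℝ^p, and set d = ∇ℓ(z). Then z is a strong τ-stationary point if and only if for every index set T ⊆ {1,…,p} with |T| = s such that min_{i ∈ T} |z_i − τ d_i| ≥ max_{j ∉ T} |z_j − τ d_j| (i.e., T collects s entries of z − τd of largest absolute value), one has d_i = 0 for all i ∈ T and z_j = 0 for all j ∉ T. -/
open scoped RealInnerProductSpace BigOperators
open Matrix

/-- The vector that agrees with `w` on `T` and vanishes off `T`. -/
noncomputable def restrictTo {p : ℕ} (T : Finset (Fin p)) (w : EuclideanSpace ℝ (Fin p)) :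
    EuclideanSpace ℝ (Fin p) :=
  WithLp.toLp 2 fun i => if i ∈ T then w i else 0

/-- The entries of `w` indexed by `T` have the largest absolute values. -/
def IsLargestSupport {p : ℕ} (T : Finset (Fin p)) (w : EuclideanSpace ℝ (Fin p)) : Prop :=
  ∀ i ∈ T, ∀ j ∉ T, |w j| ≤ |w i|

lemma restrictTo_apply {p : ℕ} (T : Finset (Fin p)) (w : EuclideanSpace ℝ (Fin p)) (i : Fin p) :
    restrictTo T w i = if i ∈ T then w i else 0 := rfl

lemma norm0_le_card {p : ℕ} {x : EuclideanSpace ℝ (Fin p)} {T : Finset (Fin p)}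
    (hx : ∀ i ∉ T, x i = 0) : norm0 x ≤ T.card := by
  rw [norm0, ← Set.ncard_coe_finset T]
  exact Set.ncard_le_ncard (fun i hi => by_contra fun h => hi (hx i h)) T.finite_toSet

lemma norm0_restrictTo_le {p : ℕ} (T : Finset (Fin p)) (w : EuclideanSpace ℝ (Fin p)) :
    norm0 (restrictTo T w) ≤ T.card :=
  norm0_le_card fun i hi => by simp [restrictTo_apply, hi]

lemma exists_support_superset {p s : ℕ} (hsp : s ≤ p) {x : EuclideanSpace ℝ (Fin p)}
    (hx : norm0 x ≤ s) : ∃ T : Finset (Fin p), T.card = s ∧ ∀ i ∉ T, x i = 0 := by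
  classical
  have hcard : (Finset.univ.filter fun i => x i ≠ 0).card ≤ s := by
    rw [norm0] at hx
    rw [← Set.ncard_coe_finset]
    simpa using hx
  obtain ⟨T, hT, hTs⟩ := Finset.exists_superset_card_eq hcard (by simpa using hsp)
  refine ⟨T, hTs, fun i hi => by_contra fun h => hi (hT ?_)⟩
  simpa using h

lemma norm_sub_sq_of_support {p : ℕ} (w : EuclideanSpace ℝ (Fin p))
    {x : EuclideanSpace ℝ (Fin p)} {T : Finset (Fin p)} (hx : ∀ i ∉ T, x i = 0) :
    ‖w - x‖ ^ 2 = ∑ i ∈ T, (w i - x i) ^ 2 + (∑ i, w i ^ 2 - ∑ i ∈ T, w i ^ 2) := by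
  classical
  rw [EuclideanSpace.real_norm_sq_eq, ← Finset.sum_add_sum_compl T,
    ← Finset.sum_add_sum_compl T fun i => w i ^ 2, add_sub_cancel_left]
  congr 1
  refine Finset.sum_congr rfl fun i hi => ?_
  simp [hx i (Finset.mem_compl.1 hi)]

lemma norm_sub_restrictTo_sq {p : ℕ} (T : Finset (Fin p)) (w : EuclideanSpace ℝ (Fin p)) :
    ‖w - restrictTo T w‖ ^ 2 = ∑ i, w i ^ 2 - ∑ i ∈ T, w i ^ 2 := by
  rw [norm_sub_sq_of_support w (T := T) fun i hi => by simp [restrictTo_apply, hi],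
    Finset.sum_eq_zero fun i hi => by simp [restrictTo_apply, hi], zero_add]

lemma IsLargestSupport.sum_sq_le {p : ℕ} {T T' : Finset (Fin p)} {w : EuclideanSpace ℝ (Fin p)}
    (hT : IsLargestSupport T w) (hcard : T'.card = T.card) :
    ∑ i ∈ T', w i ^ 2 ≤ ∑ i ∈ T, w i ^ 2 := by
  classical
  rw [← Finset.sum_sdiff_le_sum_sdiff]
  have hc := Finset.card_sdiff_comm hcard
  rcases (T' \ T).eq_empty_or_nonempty with h | h
  · rw [h, Finset.sum_empty]
    exact Finset.sum_nonneg fun i _ => sq_nonneg _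
  · obtain ⟨k, hk, hmax⟩ := Finset.exists_max_image (T' \ T) (fun i => w i ^ 2) h
    calc ∑ i ∈ T' \ T, w i ^ 2 ≤ (T' \ T).card • w k ^ 2 := Finset.sum_le_card_nsmul _ _ _ hmax
      _ = (T \ T').card • w k ^ 2 := by rw [hc]
      _ ≤ ∑ i ∈ T \ T', w i ^ 2 := Finset.card_nsmul_le_sum _ _ _ fun i hi =>
          sq_le_sq.2 (hT i (Finset.mem_sdiff.1 hi).1 k (Finset.mem_sdiff.1 hk).2)

lemma isLargestSupport_of_sum_sq_maximal {p : ℕ} {T : Finset (Fin p)} {w : EuclideanSpace ℝ (Fin p)}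
    (hT : ∀ T' : Finset (Fin p), T'.card = T.card → ∑ i ∈ T', w i ^ 2 ≤ ∑ i ∈ T, w i ^ 2) :
    IsLargestSupport T w := by
  classical
  intro i hi j hj
  have hj' : j ∉ T.erase i := fun h => hj (Finset.mem_of_mem_erase h)
  have h := hT (insert j (T.erase i)) (by
    rw [Finset.card_insert_of_notMem hj', Finset.card_erase_add_one hi])
  rw [Finset.sum_insert hj', ← Finset.add_sum_erase T _ hi] at h
  exact sq_le_sq.1 (le_of_add_le_add_right h)

lemma exists_isLargestSupport {p s : ℕ} (hsp : s ≤ p) (w : EuclideanSpace ℝ (Fin p)) :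
    ∃ T : Finset (Fin p), T.card = s ∧ IsLargestSupport T w := by
  obtain ⟨T, hT, hmax⟩ := Finset.exists_max_image
    (Finset.powersetCard s (Finset.univ : Finset (Fin p))) (fun T => ∑ i ∈ T, w i ^ 2)
    (Finset.powersetCard_nonempty.2 (by simpa using hsp))
  have hTs := (Finset.mem_powersetCard.1 hT).2
  exact ⟨T, hTs, isLargestSupport_of_sum_sq_maximal fun T' hT' =>
    hmax T' (Finset.mem_powersetCard.2 ⟨Finset.subset_univ _, hT'.trans hTs⟩)⟩

/-- The nearest `s`-sparse points of `w` are its restrictions to `s` largest entries. -/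
lemma mem_projS_iff {p s : ℕ} (hsp : s ≤ p) {w x : EuclideanSpace ℝ (Fin p)} :
    x ∈ projS s w ↔ ∃ T : Finset (Fin p), T.card = s ∧ IsLargestSupport T w ∧ x = restrictTo T w := by
  constructor
  · rintro ⟨hx, hmin⟩
    obtain ⟨T, hTs, hsupp⟩ := exists_support_superset hsp hx
    have hle (T' : Finset (Fin p)) (hT' : T'.card = s) :
        ∑ i ∈ T, (w i - x i) ^ 2 + ∑ i ∈ T', w i ^ 2 ≤ ∑ i ∈ T, w i ^ 2 := by
      have h := pow_le_pow_left₀ (norm_nonneg _)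
        (hmin (restrictTo T' w) ((norm0_restrictTo_le T' w).trans_eq hT')) 2
      rw [norm_sub_sq_of_support w hsupp, norm_sub_restrictTo_sq] at h
      linarith
    have hnonneg : 0 ≤ ∑ i ∈ T, (w i - x i) ^ 2 := Finset.sum_nonneg fun i _ => sq_nonneg _
    refine ⟨T, hTs, isLargestSupport_of_sum_sq_maximal fun T' hT' => ?_, ?_⟩
    · linarith [hle T' (hT'.trans hTs)]
    · have hzero : ∑ i ∈ T, (w i - x i) ^ 2 = 0 := by linarith [hle T hTs]
      rw [Finset.sum_eq_zero_iff_of_nonneg fun i _ => sq_nonneg _] at hzero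
      ext i
      rw [restrictTo_apply]
      split_ifs with hi
      · exact (sub_eq_zero.1 (pow_eq_zero_iff two_ne_zero |>.1 (hzero i hi))).symm
      · exact hsupp i hi
  · rintro ⟨T, hTs, hT, rfl⟩
    refine ⟨(norm0_restrictTo_le T w).trans_eq hTs, fun x' hx' => ?_⟩
    obtain ⟨T', hTs', hsupp⟩ := exists_support_superset hsp hx'
    refine (sq_le_sq₀ (norm_nonneg _) (norm_nonneg _)).1 ?_
    rw [norm_sub_sq_of_support w hsupp, norm_sub_restrictTo_sq]
    have hnonneg : 0 ≤ ∑ i ∈ T', (w i - x' i) ^ 2 := Finset.sum_nonneg fun i _ => sq_nonneg _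
    linarith [hT.sum_sq_le (hTs'.trans hTs.symm)]

lemma eq_restrictTo_sub_smul_iff {p : ℕ} {τ : ℝ} (hτ : τ ≠ 0) (T : Finset (Fin p))
    (z d : EuclideanSpace ℝ (Fin p)) :
    z = restrictTo T (z - τ • d) ↔ (∀ i ∈ T, d i = 0) ∧ ∀ j ∉ T, z j = 0 := by
  constructor
  · intro h
    have hz (i : Fin p) : z i = if i ∈ T then z i - τ * d i else 0 :=
      congrArg (fun v : EuclideanSpace ℝ (Fin p) => v i) h
    refine ⟨fun i hi => ?_, fun j hj => ?_⟩
    · have hi' := hz i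
      rw [if_pos hi, eq_comm, sub_eq_self] at hi'
      exact (mul_eq_zero.1 hi').resolve_left hτ
    · rw [hz j, if_neg hj]
  · rintro ⟨hd, hz⟩
    ext i
    rw [restrictTo_apply]
    split_ifs with hi
    · simp [hd i hi]
    · exact hz i hi

/-- with `d = ∇ℓ(z)`, `z` is a strong τ-stationary point iff for
every index set `T` of cardinality `s` collecting `s` entries of `z − τd` of
largest absolute value, one has `dᵢ = 0` for `i ∈ T` and `z_j = 0` for `j ∉ T`
(the stationary equation `F_τ(u; T) = 0`). -/
theorem strong_stationary_iff_stationary_equation (n p s : ℕ)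
    (hn : 0 < n) (hs : 0 < s) (hsp : s < p)
    (X : Matrix (Fin n) (Fin p) ℝ) (y : Fin n → ℝ)
    (hy : ∀ i, y i = 0 ∨ y i = 1)
    (ℓ : EuclideanSpace ℝ (Fin p) → ℝ)
    (hℓ : ∀ z, ℓ z = (1 / (n : ℝ)) *
      ∑ i, (Real.log (1 + Real.exp (∑ j, X i j * z j)) - y i * (∑ j, X i j * z j)))
    (τ : ℝ) (hτ : 0 < τ) (z : EuclideanSpace ℝ (Fin p))
    (d : EuclideanSpace ℝ (Fin p)) (hd : d = gradient ℓ z) :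
    projS s (z - τ • d) = {z} ↔
      ∀ T : Finset (Fin p), T.card = s →
        (∀ i ∈ T, ∀ j ∉ T, |z j - τ * d j| ≤ |z i - τ * d i|) →
        (∀ i ∈ T, d i = 0) ∧ (∀ j ∉ T, z j = 0) := by
  have htop (T : Finset (Fin p)) :
      IsLargestSupport T (z - τ • d) ↔ ∀ i ∈ T, ∀ j ∉ T, |z j - τ * d j| ≤ |z i - τ * d i| := Iff.rfl
  simp only [← htop, ← eq_restrictTo_sub_smul_iff hτ.ne']
  constructor
  · intro h T hTs hT
    have hmem : restrictTo T (z - τ • d) ∈ projS s (z - τ • d) :=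
      (mem_projS_iff hsp.le).2 ⟨T, hTs, hT, rfl⟩
    rw [h] at hmem
    exact hmem.symm
  · intro h
    refine Set.eq_singleton_iff_unique_mem.2 ⟨?_, fun x hx => ?_⟩
    · obtain ⟨T, hTs, hT⟩ := exists_isLargestSupport hsp.le (z - τ • d)
      exact (mem_projS_iff hsp.le).2 ⟨T, hTs, hT, h T hTs hT⟩
    · obtain ⟨T, hTs, hT, rfl⟩ := (mem_projS_iff hsp.le).1 hx
      exact (h T hTs hT).symm
end
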